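/- Let V be a 2n-dimensional symplectic space and x a self-adjoint nilpotent endomorphism with x² = 0 and Jordan type (2^{2n₂} 1^{2n₁}). For 0 ≤ k ≤ n₁ + 2n₂, the set X(k₂,h) of k-dimensional isotropic subspaces F of ker(x) with dim(F ∩ Im(x)) = k₂ and dim(F ∩ x(F^⊥)) = k₂ − 2h is nonempty if and only if max{0, k−n₁} ≤ k₂ ≤ min{k, 2n₂} and max{0, k₂−n₂} ≤ h ≤ k₂/2. -/

import Mathlib

open Module Submodule LinearMap

noncomputable section

variable {V : Type*} [AddCommGroup V] [Module ℂ V]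

/-- Perpendicular of a subspace with respect to a bilinear form. -/
def perp (B : V →ₗ[ℂ] V →ₗ[ℂ] ℂ) (W : Submodule ℂ V) : Submodule ℂ V where
  carrier := {v | ∀ w ∈ W, B v w = 0}
  add_mem' := by
    intro a b ha hb w hw
    simp [map_add, ha w hw, hb w hw]
  zero_mem' := by intro w hw; simp
  smul_mem' := by
    intro c a ha w hw
    simp [map_smul, ha w hw]

@[simp] lemma mem_perp {B : V →ₗ[ℂ] V →ₗ[ℂ] ℂ} {W : Submodule ℂ V} {v : V} :
    v ∈ perp B W ↔ ∀ w ∈ W, B v w = 0 := Iff.rfl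

/-- The subquotient W/U for U ≤ W. -/
abbrev SubQuot (W U : Submodule ℂ V) : Type _ := W ⧸ (U.comap W.subtype)

/-- The endomorphism induced on the subquotient W/U by x. -/
def subQuotMap (x : V →ₗ[ℂ] V) (W U : Submodule ℂ V)
    (hW : ∀ v ∈ W, x v ∈ W) (hU : ∀ v ∈ U, x v ∈ U) :
    SubQuot W U →ₗ[ℂ] SubQuot W U :=
  Submodule.mapQ _ _ (x.restrict hW) (by
    intro a ha
    simp only [Submodule.mem_comap, LinearMap.restrict_apply, Submodule.coe_subtype] at ha ⊢
    exact hU a.1 ha)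

/-- The Zariski topology on a complex vector space. -/
def zariski (M : Type*) [AddCommGroup M] [Module ℂ M] : TopologicalSpace M :=
  TopologicalSpace.generateFrom
    {U | ∃ f : M → ℂ,
      f ∈ Algebra.adjoin ℂ {g : M → ℂ | ∃ φ : M →ₗ[ℂ] ℂ, g = ⇑φ} ∧ U = {x | f x ≠ 0}}

/-- The Grassmannian of k-dimensional subspaces of M. -/
def Grass (M : Type*) [AddCommGroup M] [Module ℂ M] (k : ℕ) : Type _ :=
  {F : Submodule ℂ M // finrank ℂ F = k}

/-- The Zariski topology on the Grassmannian, coinduced from the space of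
linearly independent k-tuples with its Zariski topology. -/
instance grassTopology (M : Type*) [AddCommGroup M] [Module ℂ M] (k : ℕ) :
    TopologicalSpace (Grass M k) :=
  TopologicalSpace.coinduced
    (fun v : {v : Fin k → M // LinearIndependent ℂ v} =>
      (⟨Submodule.span ℂ (Set.range v.1),
        (finrank_span_eq_card v.2).trans (by simp)⟩ : Grass M k))
    (TopologicalSpace.induced Subtype.val (zariski (Fin k → M)))

end

/-!
Two facts about a self-adjoint `x` drive the proof: `ker x = (range x)ᗮ`, and `x(Fᗮ) = x(Gᗮ)` for
`G = F ∩ range x`. For necessity, `F + range x` is isotropic, which bounds `dim F - dim G`, and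
`dim x(Gᗮ) = dim range x - dim G` bounds the dimension of `F ∩ x(Fᗮ)`.

For sufficiency, write `G = x(E)` with `E` disjoint from `ker x`. Then `F ∩ x(Fᗮ)` is the image
under `x` of the radical of `(v, w) ↦ ⟨x v, w⟩` restricted to `E`. A subspace `E` with an
`r`-dimensional radical is obtained from an isotropic subspace of dimension `r + h` by adjoining `h`
vectors, each one not orthogonal to the current radical, so that the radical loses one dimension
each time.
-/

section CommRing

variable {R M : Type*} [CommRing R] [AddCommGroup M] [Module R M] {B : LinearMap.BilinForm R M}
  {x : M →ₗ[R] M}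

/-- The radical of the restriction of the bilinear form `B` to the subspace `E`, encoded as a
subspace of the ambient space; `E` is isotropic when it equals its radical. -/
def restrictRadical (B : LinearMap.BilinForm R M) (E : Submodule R M) : Submodule R M :=
  E ⊓ B.orthogonal E

lemma orthogonal_sup (B : LinearMap.BilinForm R M) (E F : Submodule R M) :
    B.orthogonal (E ⊔ F) = B.orthogonal E ⊓ B.orthogonal F := by
  refine le_antisymm (le_inf (B.orthogonal_le le_sup_left) (B.orthogonal_le le_sup_right)) ?_
  rintro v ⟨hE, hF⟩ _ hw
  obtain ⟨e, he, f, hf, rfl⟩ := Submodule.mem_sup.1 hw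
  rw [BilinForm.add_left, hE e he, hF f hf, add_zero]

lemma sup_le_orthogonal_sup (hB : B.IsRefl) {E F : Submodule R M} (hE : E ≤ B.orthogonal E)
    (hF : F ≤ B.orthogonal F) (hEF : E ≤ B.orthogonal F) :
    E ⊔ F ≤ B.orthogonal (E ⊔ F) := by
  rw [orthogonal_sup]
  have hFE : F ≤ B.orthogonal E := fun f hf e he => hB f e (hEF he f hf)
  exact sup_le (le_inf hE hEF) (le_inf hFE hF)

lemma isSelfAdjoint_of_isAlt_compLeft (hB : B.IsAlt) (hBx : (B.compLeft x).IsAlt) :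
    B.IsSelfAdjoint x := fun v w => by
  rw [← BilinForm.compLeft_apply, ← hBx.neg_eq, BilinForm.compLeft_apply, hB.neg_eq]

lemma orthogonal_compLeft (B : LinearMap.BilinForm R M) (x : M →ₗ[R] M) (E : Submodule R M) :
    (B.compLeft x).orthogonal E = B.orthogonal (E.map x) := by
  ext v
  simp only [BilinForm.mem_orthogonal_iff, BilinForm.compLeft_apply, mem_map,
    forall_exists_index, and_imp, forall_apply_eq_imp_iff₂]

lemma ker_compLeft (hnd : B.Nondegenerate) (x : M →ₗ[R] M) : ker (B.compLeft x) = ker x :=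
  LinearMap.ker_comp_of_ker_eq_bot x hnd.ker_eq_bot

lemma orthogonal_range (hnd : B.Nondegenerate) (hx : B.IsSelfAdjoint x) :
    B.orthogonal (range x) = ker x := by
  ext w
  constructor
  · exact fun hw => hnd.2 _ fun v => (hx v w).symm.trans (hw _ (mem_range_self x v))
  · rintro hw _ ⟨v, rfl⟩
    rw [hx v w, mem_ker.1 hw, map_zero]

lemma ker_le_orthogonal_of_le_range (hnd : B.Nondegenerate) (hx : B.IsSelfAdjoint x)
    {G : Submodule R M} (hG : G ≤ range x) : ker x ≤ B.orthogonal G :=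
  (orthogonal_range hnd hx).ge.trans (B.orthogonal_le hG)

end CommRing

section Finrank

variable {K V W : Type*} [Field K] [AddCommGroup V] [Module K V] [AddCommGroup W] [Module K W]

lemma finrank_map_add_finrank_inf_ker (f : V →ₗ[K] W) (E : Submodule K V) [FiniteDimensional K E] :
    finrank K (E.map f) + finrank K ↥(E ⊓ ker f) = finrank K E := by
  rw [← finrank_range_add_finrank_ker (f.domRestrict E), range_domRestrict, ker_domRestrict,
    ← finrank_map_subtype_eq, map_comap_subtype]

lemma finrank_map_of_disjoint_ker {f : V →ₗ[K] W} {E : Submodule K V} [FiniteDimensional K E]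
    (hE : Disjoint E (ker f)) : finrank K (E.map f) = finrank K E := by
  rw [← finrank_map_add_finrank_inf_ker f E, hE.eq_bot, finrank_bot, add_zero]

lemma finrank_inf_ker_add_one (φ : V →ₗ[K] K) {E : Submodule K V} [FiniteDimensional K E]
    {v : V} (hv : v ∈ E) (hφv : φ v ≠ 0) : finrank K ↥(E ⊓ ker φ) + 1 = finrank K E := by
  have hmap : E.map φ = ⊤ := (eq_bot_or_eq_top _).resolve_left fun hbot =>
    hφv <| (Submodule.mem_bot K).1 <| hbot ▸ mem_map_of_mem hv
  rw [← finrank_map_add_finrank_inf_ker φ E, hmap, finrank_top, finrank_self, add_comm]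

end Finrank

section Isotropic

variable {K V : Type*} [Field K] [AddCommGroup V] [Module K V] {B : LinearMap.BilinForm K V}

lemma orthogonal_inf [FiniteDimensional K V] (hB : B.IsRefl) (hnd : B.Nondegenerate)
    (E F : Submodule K V) :
    B.orthogonal (E ⊓ F) = B.orthogonal E ⊔ B.orthogonal F := by
  rw [← B.orthogonal_orthogonal hnd hB (B.orthogonal E ⊔ B.orthogonal F), orthogonal_sup,
    B.orthogonal_orthogonal hnd hB, B.orthogonal_orthogonal hnd hB]

lemma two_mul_finrank_le_of_le_orthogonal [FiniteDimensional K V] (hnd : B.Nondegenerate)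
    {E : Submodule K V} (hE : E ≤ B.orthogonal E) : 2 * finrank K E ≤ finrank K V := by
  have hle := finrank_mono hE
  rw [BilinForm.finrank_orthogonal hnd] at hle
  omega

lemma restrictRadical_sup_span_singleton (hB : B.IsRefl) {E : Submodule K V} {ρ v : V}
    (hρ : ρ ∈ restrictRadical B E) (hρv : B ρ v ≠ 0) :
    restrictRadical B (E ⊔ span K {v}) = restrictRadical B E ⊓ ker (B v) := by
  unfold restrictRadical
  have hspan : B.orthogonal (span K {v}) = ker (B v) :=
    BilinForm.orthogonal_span_singleton_eq_toLin_ker v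
  rw [orthogonal_sup, hspan, inf_assoc]
  refine le_antisymm (le_inf ?_ inf_le_right) (inf_le_inf_right _ le_sup_left)
  rintro w ⟨hw, hwE, -⟩
  obtain ⟨e, he, u, hu, rfl⟩ := Submodule.mem_sup.1 hw
  obtain ⟨c, rfl⟩ := mem_span_singleton.1 hu
  have hc : c = 0 := by
    have h := hwE ρ hρ.1
    rw [BilinForm.add_right, hB e ρ (hρ.2 e he), BilinForm.smul_right, zero_add] at h
    exact (mul_eq_zero.1 h).resolve_right hρv
  rwa [hc, zero_smul, add_zero]

variable [FiniteDimensional K V]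

lemma finrank_le_finrank_inf_orthogonal_add (B : LinearMap.BilinForm K V) (E W : Submodule K V) :
    finrank K W ≤ finrank K ↥(W ⊓ B.orthogonal E) + finrank K E := by
  have hE := BilinForm.finrank_add_finrank_orthogonal' (B := B) E
  have hsup := finrank_sup_add_finrank_inf_eq W (B.orthogonal E)
  have hle := finrank_le (W ⊔ B.orthogonal E)
  omega

lemma exists_le_orthogonal_disjoint_finrank_eq (hB : B.IsAlt) (W N : Submodule K V) (r : ℕ)
    (hr : 2 * r + finrank K N ≤ finrank K W) :
    ∃ E ≤ W, E ≤ B.orthogonal E ∧ Disjoint E N ∧ finrank K E = r := by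
  induction r with
  | zero => exact ⟨⊥, bot_le, bot_le, disjoint_bot_left, finrank_bot K V⟩
  | succ r ih =>
    obtain ⟨E, hEW, hE, hEN, hEr⟩ := ih (by omega)
    obtain ⟨v, ⟨hvW, hvE⟩, hv⟩ : ∃ v ∈ W ⊓ B.orthogonal E, v ∉ E ⊔ N := by
      refine SetLike.not_le_iff_exists.1 fun hle => ?_
      have hmono := finrank_mono hle
      have hsup := finrank_add_le_finrank_add_finrank E N
      have hinf := finrank_le_finrank_inf_orthogonal_add B E W
      omega
    have hspan : span K {v} ≤ B.orthogonal (span K {v}) := by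
      rw [span_singleton_le_iff_mem, BilinForm.orthogonal_span_singleton_eq_toLin_ker]
      exact hB.self_eq_zero v
    refine ⟨E ⊔ span K {v}, sup_le hEW ((span_singleton_le_iff_mem _ _).2 hvW), ?_, ?_, ?_⟩
    · rw [sup_comm]
      exact sup_le_orthogonal_sup hB.isRefl hspan hE ((span_singleton_le_iff_mem _ _).2 hvE)
    · rw [sup_comm]
      exact hEN.disjoint_sup_left_of_disjoint_sup_right
        (disjoint_span_singleton_of_notMem hv).symm
    · rw [finrank_sup_span_singleton fun h => hv (mem_sup_left h), hEr]

lemma exists_finrank_restrictRadical_eq (hB : B.IsAlt) (r h : ℕ)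
    (hrh : 2 * (r + h) + finrank K (ker B) ≤ finrank K V) :
    ∃ E : Submodule K V, Disjoint E (ker B) ∧ finrank K E = r + 2 * h ∧
      finrank K (restrictRadical B E) = r := by
  induction h generalizing r with
  | zero =>
    obtain ⟨E, -, hE, hdisj, hEr⟩ :=
      exists_le_orthogonal_disjoint_finrank_eq hB ⊤ (ker B) r (by simpa using hrh)
    exact ⟨E, hdisj, hEr, by rw [restrictRadical, inf_eq_left.2 hE, hEr]⟩
  | succ h ih =>
    obtain ⟨E, hdisj, hE, hrad⟩ := ih (r + 1) (by omega)
    obtain ⟨ρ, hρ, hρ0⟩ : ∃ ρ ∈ restrictRadical B E, ρ ≠ 0 :=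
      exists_mem_ne_zero_of_ne_bot fun hbot => by
        rw [hbot, finrank_bot] at hrad
        omega
    obtain ⟨v, hρv⟩ : ∃ v, B ρ v ≠ 0 := by
      by_contra! hker
      exact hρ0 (disjoint_def.1 hdisj ρ hρ.1 (LinearMap.ext hker))
    have hvρ : B v ρ ≠ 0 := fun hzero => hρv (hB.isRefl v ρ hzero)
    have hvE : v ∉ E := fun hv => hvρ (hρ.2 v hv)
    have hrad' := restrictRadical_sup_span_singleton hB.isRefl hρ hρv
    refine ⟨E ⊔ span K {v}, ?_, ?_, ?_⟩
    · refine disjoint_def.2 fun w hw hwker => disjoint_def.1 hdisj w ?_ hwker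
      have hwrad : w ∈ restrictRadical B (E ⊔ span K {v}) :=
        ⟨hw, fun u _ => hB.isRefl w u (LinearMap.congr_fun (mem_ker.1 hwker) u)⟩
      rw [hrad'] at hwrad
      exact hwrad.1.1
    · rw [finrank_sup_span_singleton hvE, hE]
      ring
    · rw [hrad']
      have hdrop := finrank_inf_ker_add_one (B v) hρ hvρ
      omega

end Isotropic

section SelfAdjoint

variable {K V : Type*} [Field K] [AddCommGroup V] [Module K V] {B : LinearMap.BilinForm K V}
  {x : V →ₗ[K] V} [FiniteDimensional K V]

lemma map_orthogonal_inf_range (hB : B.IsRefl) (hnd : B.Nondegenerate) (hx : B.IsSelfAdjoint x)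
    (F : Submodule K V) :
    (B.orthogonal (F ⊓ range x)).map x = (B.orthogonal F).map x := by
  rw [orthogonal_inf hB hnd, orthogonal_range hnd hx, Submodule.map_sup,
    LinearMap.le_ker_iff_map.1 le_rfl, sup_bot_eq]

lemma finrank_inf_range_add_finrank_map_orthogonal (hB : B.IsRefl) (hnd : B.Nondegenerate)
    (hx : B.IsSelfAdjoint x) (F : Submodule K V) :
    finrank K ↥(F ⊓ range x) + finrank K ((B.orthogonal F).map x) = finrank K (range x) := by
  have hker : ker x ≤ B.orthogonal (F ⊓ range x) :=
    ker_le_orthogonal_of_le_range hnd hx inf_le_right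
  have hmap := finrank_map_add_finrank_inf_ker x (B.orthogonal (F ⊓ range x))
  rw [map_orthogonal_inf_range hB hnd hx, inf_eq_right.2 hker,
    BilinForm.finrank_orthogonal hnd] at hmap
  have hrank := finrank_range_add_finrank_ker x
  have hle := finrank_mono (inf_le_right : F ⊓ range x ≤ range x)
  omega

lemma inf_map_orthogonal_eq_map_restrictRadical (hB : B.IsRefl) (hnd : B.Nondegenerate)
    (hx : B.IsSelfAdjoint x) {E F : Submodule K V} (hEF : F ⊓ range x = E.map x) :
    F ⊓ (B.orthogonal F).map x = (restrictRadical (B.compLeft x) E).map x :=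
  calc F ⊓ (B.orthogonal F).map x
      = F ⊓ range x ⊓ (B.orthogonal (F ⊓ range x)).map x := by
        rw [map_orthogonal_inf_range hB hnd hx, inf_assoc, inf_eq_right.2 map_le_range]
    _ = E.map x ⊓ (B.orthogonal (E.map x)).map x := by rw [hEF]
    _ = (E ⊓ B.orthogonal (E.map x)).map x := by
        rw [map_inf_eq_map_inf_comap,
          comap_map_eq_self (ker_le_orthogonal_of_le_range hnd hx map_le_range)]
    _ = (restrictRadical (B.compLeft x) E).map x := by
        rw [restrictRadical, orthogonal_compLeft]

variable (hx2 : x ∘ₗ x = 0)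
include hx2

lemma two_mul_finrank_add_finrank_range_le (hB : B.IsRefl) (hnd : B.Nondegenerate)
    (hx : B.IsSelfAdjoint x) {F : Submodule K V} (hFker : F ≤ ker x) (hF : F ≤ B.orthogonal F) :
    2 * (finrank K F + finrank K (range x)) ≤ finrank K V + 2 * finrank K ↥(F ⊓ range x) := by
  have hker : ker x ≤ B.orthogonal (range x) := (orthogonal_range hnd hx).ge
  have hsup := two_mul_finrank_le_of_le_orthogonal hnd <|
    sup_le_orthogonal_sup hB hF ((range_le_ker_iff.2 hx2).trans hker) (hFker.trans hker)
  have hdim := finrank_sup_add_finrank_inf_eq F (range x)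
  omega

lemma exists_le_ker_le_orthogonal_finrank_eq (hB : B.IsAlt) (hnd : B.Nondegenerate)
    (hBx : (B.compLeft x).IsAlt) {r h c : ℕ} (hrh : 2 * (r + h) ≤ finrank K (range x))
    (hc : 2 * c + finrank K (range x) ≤ finrank K (ker x)) :
    ∃ F ≤ ker x, F ≤ B.orthogonal F ∧ finrank K F = r + 2 * h + c ∧
      finrank K ↥(F ⊓ range x) = r + 2 * h ∧ finrank K ↥(F ⊓ (B.orthogonal F).map x) = r := by
  have hx : B.IsSelfAdjoint x := isSelfAdjoint_of_isAlt_compLeft hB hBx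
  have hrange : range x ≤ ker x := range_le_ker_iff.2 hx2
  obtain ⟨E, hEker, hEdim, hErad⟩ := exists_finrank_restrictRadical_eq hBx r h (by
    have hrank := finrank_range_add_finrank_ker x
    rw [ker_compLeft hnd]
    omega)
  rw [ker_compLeft hnd] at hEker
  obtain ⟨P, hPker, hP, hPrange, hPdim⟩ :=
    exists_le_orthogonal_disjoint_finrank_eq hB (ker x) (range x) c hc
  have hEx : E.map x ≤ range x := map_le_range
  have hExdim : finrank K (E.map x) = r + 2 * h := by
    rw [finrank_map_of_disjoint_ker hEker, hEdim]
  have hinf : (E.map x ⊔ P) ⊓ range x = E.map x := by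
    rw [sup_inf_assoc_of_le P hEx, hPrange.eq_bot, sup_bot_eq]
  have hExiso : E.map x ≤ B.orthogonal (E.map x) :=
    (hEx.trans hrange).trans (ker_le_orthogonal_of_le_range hnd hx hEx)
  refine ⟨E.map x ⊔ P, sup_le (hEx.trans hrange) hPker, ?_, ?_, by rw [hinf, hExdim], ?_⟩
  · rw [sup_comm]
    exact sup_le_orthogonal_sup hB.isRefl hP hExiso
      (hPker.trans (ker_le_orthogonal_of_le_range hnd hx hEx))
  · have hdim := finrank_sup_add_finrank_inf_eq (E.map x) P
    rwa [(hPrange.symm.mono_left hEx).eq_bot, finrank_bot, add_zero, hExdim, hPdim] at hdim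
  · have hradker : Disjoint (restrictRadical (B.compLeft x) E) (ker x) :=
      hEker.mono_left inf_le_left
    rw [inf_map_orthogonal_eq_map_restrictRadical hB.isRefl hnd hx hinf,
      finrank_map_of_disjoint_ker hradker, hErad]

end SelfAdjoint

/-- Over an arbitrary field, self-adjointness of `x` is encoded as the form `(v, w) ↦ B (x v) w`
being alternating; in characteristic other than two this is the usual condition. -/
theorem stmt15_general {K V : Type*} [Field K] [AddCommGroup V] [Module K V]
    [FiniteDimensional K V] {B : LinearMap.BilinForm K V} (hB : B.IsAlt) (hnd : B.Nondegenerate)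
    {x : V →ₗ[K] V} (hBx : (B.compLeft x).IsAlt) (hx2 : x ∘ₗ x = 0) {n₁ n₂ : ℕ}
    (hdim : finrank K V = 2 * (2 * n₂ + n₁)) (hrank : finrank K (range x) = 2 * n₂)
    (k k₂ h : ℕ) :
    {F : Submodule K V | F ≤ ker x ∧ F ≤ B.orthogonal F ∧ finrank K F = k ∧
        finrank K ↥(F ⊓ range x) = k₂ ∧
        finrank K ↥(F ⊓ (B.orthogonal F).map x) + 2 * h = k₂}.Nonempty ↔
      (k ≤ k₂ + n₁ ∧ k₂ ≤ k ∧ k₂ ≤ 2 * n₂ ∧ k₂ ≤ n₂ + h ∧ 2 * h ≤ k₂) := by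
  have hx := isSelfAdjoint_of_isAlt_compLeft hB hBx
  constructor
  · rintro ⟨F, hFker, hF, hk, hk₂, hh⟩
    have hsum := two_mul_finrank_add_finrank_range_le hx2 hB.isRefl hnd hx hFker hF
    have himage := finrank_inf_range_add_finrank_map_orthogonal hB.isRefl hnd hx F
    have hleft := finrank_mono (inf_le_left : F ⊓ range x ≤ F)
    have hradical := finrank_mono (inf_le_right : F ⊓ (B.orthogonal F).map x ≤ _)
    omega
  · rintro ⟨hkn₁, hk₂k, -, hk₂h, hhk₂⟩
    have hker := finrank_range_add_finrank_ker x
    obtain ⟨F, hFker, hF, hk, hk₂, hr⟩ := exists_le_ker_le_orthogonal_finrank_eq hx2 hB hnd hBx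
      (r := k₂ - 2 * h) (h := h) (c := k - k₂) (by omega) (by omega)
    exact ⟨F, hFker, hF, by omega, by omega, by omega⟩

section Skew

variable {V : Type*} [AddCommGroup V] [Module ℂ V] {B : V →ₗ[ℂ] V →ₗ[ℂ] ℂ}
  (hskew : ∀ v w : V, B w v = -B v w)
include hskew

lemma isAlt_of_skew : BilinForm.IsAlt B := fun v => self_eq_neg.1 (hskew v v)

lemma isAlt_compLeft_of_skew {x : V →ₗ[ℂ] V} (hsa : ∀ v w : V, B (x v) w = B v (x w)) :
    (BilinForm.compLeft B x).IsAlt := fun v => self_eq_neg.1 ((hsa v v).trans (hskew (x v) v))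

lemma nondegenerate_of_skew (hnondeg : ∀ v : V, (∀ w : V, B v w = 0) → v = 0) :
    BilinForm.Nondegenerate B :=
  (isAlt_of_skew hskew).isRefl.nondegenerate_iff_separatingLeft.2 hnondeg

lemma perp_eq_orthogonal : perp B = BilinForm.orthogonal B := by
  ext W v
  exact forall₂_congr fun w _ => (isAlt_of_skew hskew).eq_iff

end Skew

/-- for self-adjoint x with x² = 0 of Jordan type (2^{2n₂} 1^{2n₁}) on a
2n-dimensional symplectic space and 0 ≤ k ≤ n₁ + 2n₂, the set X(k₂,h) of k-dimensional
isotropic subspaces F of ker x with dim(F ∩ Im x) = k₂ and dim(F ∩ x(F^⊥)) = k₂ − 2h is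
nonempty iff max{0, k−n₁} ≤ k₂ ≤ min{k, 2n₂} and max{0, k₂−n₂} ≤ h ≤ k₂/2. -/
theorem stmt15 (V : Type*) [AddCommGroup V] [Module ℂ V] [FiniteDimensional ℂ V]
    (B : V →ₗ[ℂ] V →ₗ[ℂ] ℂ) (hskew : ∀ v w : V, B w v = - B v w)
    (hnondeg : ∀ v : V, (∀ w : V, B v w = 0) → v = 0)
    (x : V →ₗ[ℂ] V) (hsa : ∀ v w : V, B (x v) w = B v (x w)) (hx2 : x ∘ₗ x = 0)
    (n n₁ n₂ : ℕ) (hdim : finrank ℂ V = 2 * n) (hn : n = 2 * n₂ + n₁)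
    (hrank : finrank ℂ ↥(LinearMap.range x) = 2 * n₂)
    (k k₂ h : ℕ) (hk : k ≤ n₁ + 2 * n₂) :
    {F : Submodule ℂ V | F ≤ LinearMap.ker x ∧ F ≤ perp B F ∧ finrank ℂ F = k ∧
        finrank ℂ ↥(F ⊓ LinearMap.range x) = k₂ ∧
        finrank ℂ ↥(F ⊓ (perp B F).map x) + 2 * h = k₂}.Nonempty ↔
      (k ≤ k₂ + n₁ ∧ k₂ ≤ k ∧ k₂ ≤ 2 * n₂ ∧ k₂ ≤ n₂ + h ∧ 2 * h ≤ k₂) := by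
  rw [perp_eq_orthogonal hskew]
  exact stmt15_general (isAlt_of_skew hskew) (nondegenerate_of_skew hskew hnondeg)
    (isAlt_compLeft_of_skew hskew hsa) hx2 (hn ▸ hdim) hrank k k₂ h
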